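/- Let f : [a, b] → ℝ be twice continuously differentiable with 0 < m ≤ f''(x) ≤ M for all x ∈ [a, b]. Let u < v be points of [a, b], let ℓ be the affine interpolant of f through (u, f(u)) and (v, f(v)), and for y ∈ (u, v) let ℓ_y be the piecewise linear interpolant of f with nodes u, y, v (affine on [u, y] and on [y, v], matching f at u, y, v). Define J(p) = ℓ(p) − f(p) ≥ 0 and J_y(p) = ℓ_y(p) − f(p) ≥ 0 for p ∈ [u, v]. Then for every p ∈ (u, v), J(p) − J_y(p) ≥ (m/M) [ ((v − y)/(v − p)) · 1_{(u, y)}(p) + ((y − u)/(p − u)) · 1_{(y, v)}(p) ] · J(p) ≥ 0; moreover J_y(y) = 0. -/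

import Mathlib

open Set

/-!
If `m ≤ f'' ≤ M`, then `f - m x² / 2` and `M x² / 2 - f` are convex. The interpolation error of
`c x² / 2` on `[u, v]` is exactly `c (p - u) (v - p) / 2`, so the error `J` of `f` is squeezed
between `m (p - u) (v - p) / 2` and `M (p - u) (v - p) / 2`. On `[u, y]` the lines `ℓ` and `ℓ_y`
meet at `u` and differ by `J y` at `y`, so `J p - J_y p = (p - u) / (y - u) * J y`; the lower
bound for `J y` against the upper bound for `J p` gives the factor `(m / M) (v - y) / (v - p)`.
The other side of `y` is the mirror image.
-/

section SecondDerivative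

variable {D : Set ℝ} {f f' f'' : ℝ → ℝ} {c : ℝ}

lemma strongConvexOn_of_hasDerivWithinAt2_ge (hD : Convex ℝ D) (hf : ContinuousOn f D)
    (hf' : ∀ x ∈ interior D, HasDerivWithinAt f (f' x) (interior D) x)
    (hf'' : ∀ x ∈ interior D, HasDerivWithinAt f' (f'' x) (interior D) x)
    (hc : ∀ x ∈ interior D, c ≤ f'' x) : StrongConvexOn D c f := by
  have hquad (x : ℝ) : HasDerivAt (fun x ↦ c / 2 * ‖x‖ ^ 2) (c * x) x := by
    simpa only [Real.norm_eq_abs, sq_abs] using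
      ((hasDerivAt_pow 2 x).const_mul (c / 2)).congr_deriv (by ring)
  have hlin (x : ℝ) : HasDerivAt (fun x ↦ c * x) c x := by
    simpa using (hasDerivAt_id x).const_mul c
  rw [strongConvexOn_iff_convex]
  exact convexOn_of_hasDerivWithinAt2_nonneg hD (hf.sub (by fun_prop))
    (fun x hx ↦ (hf' x hx).sub (hquad x).hasDerivWithinAt)
    (fun x hx ↦ (hf'' x hx).sub (hlin x).hasDerivWithinAt)
    (fun x hx ↦ sub_nonneg.2 (hc x hx))

lemma strongConcaveOn_of_hasDerivWithinAt2_le (hD : Convex ℝ D) (hf : ContinuousOn f D)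
    (hf' : ∀ x ∈ interior D, HasDerivWithinAt f (f' x) (interior D) x)
    (hf'' : ∀ x ∈ interior D, HasDerivWithinAt f' (f'' x) (interior D) x)
    (hc : ∀ x ∈ interior D, f'' x ≤ -c) : StrongConcaveOn D c f := by
  have hneg : StrongConvexOn D c (-f) :=
    strongConvexOn_of_hasDerivWithinAt2_ge hD hf.neg (fun x hx ↦ (hf' x hx).neg)
      (fun x hx ↦ (hf'' x hx).neg) (fun x hx ↦ le_neg_of_le_neg (hc x hx))
  rw [← neg_neg f]
  exact UniformConvexOn.neg hneg

end SecondDerivative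

/-- The affine interpolant `ℓ` of `f` with nodes `u` and `v`, evaluated at `p`. The nodes may come
in either order; for `u = v` it is the constant `f u`. -/
noncomputable def affineInterpolant (f : ℝ → ℝ) (u v p : ℝ) : ℝ :=
  f u + (f v - f u) / (v - u) * (p - u)

/-- The piecewise linear interpolant `ℓ_y` of `f` with nodes `u < y < v`, evaluated at `p`. The
outer pieces are extended affinely beyond `u` and `v`. -/
noncomputable def refinedInterpolant (f : ℝ → ℝ) (u y v p : ℝ) : ℝ :=
  if p ≤ y then affineInterpolant f u y p else affineInterpolant f y v p

/-- The factor by which `m / M` is multiplied in the relative improvement at `p` obtained from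
inserting the node `y` into `[u, v]`. It vanishes at `p = y`. -/
noncomputable def refinementWeight (u y v p : ℝ) : ℝ :=
  (v - y) / (v - p) * indicator (Ioo u y) (fun _ ↦ (1 : ℝ)) p +
    (y - u) / (p - u) * indicator (Ioo y v) (fun _ ↦ (1 : ℝ)) p

variable {f : ℝ → ℝ} {s : Set ℝ} {m M u v y p : ℝ}

lemma affineInterpolant_left (f : ℝ → ℝ) (u v : ℝ) : affineInterpolant f u v u = f u := by
  simp [affineInterpolant]

lemma affineInterpolant_comm (f : ℝ → ℝ) (u v p : ℝ) :
    affineInterpolant f u v p = affineInterpolant f v u p := by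
  obtain rfl | huv := eq_or_ne u v
  · rfl
  unfold affineInterpolant
  field_simp
  ring

lemma affineInterpolant_right (f : ℝ → ℝ) (u v : ℝ) : affineInterpolant f u v v = f v := by
  rw [affineInterpolant_comm, affineInterpolant_left]

lemma affineInterpolant_convexCombination (f : ℝ → ℝ) (u v : ℝ) {α β : ℝ} (h : α + β = 1) :
    affineInterpolant f u v (α * u + β * v) = α * f u + β * f v := by
  obtain rfl := eq_sub_of_add_eq h
  obtain rfl | huv := eq_or_ne u v
  · simp only [affineInterpolant]
    ring
  unfold affineInterpolant
  field_simp
  ring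

lemma affineInterpolant_sub_affineInterpolant (f : ℝ → ℝ) (v p : ℝ) (hyu : y ≠ u) :
    affineInterpolant f u v p - affineInterpolant f u y p =
      (p - u) / (y - u) * (affineInterpolant f u v y - f y) := by
  simp only [affineInterpolant]
  field_simp
  ring

lemma refinedInterpolant_of_le (h : p ≤ y) :
    refinedInterpolant f u y v p = affineInterpolant f u y p :=
  if_pos h

lemma refinedInterpolant_of_ge (h : y ≤ p) :
    refinedInterpolant f u y v p = affineInterpolant f y v p := by
  obtain rfl | hlt := h.eq_or_lt
  · rw [refinedInterpolant_of_le le_rfl, affineInterpolant_right, affineInterpolant_left]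
  · exact if_neg hlt.not_ge

lemma refinedInterpolant_self (f : ℝ → ℝ) (u y v : ℝ) : refinedInterpolant f u y v y = f y := by
  rw [refinedInterpolant_of_le le_rfl, affineInterpolant_right]

lemma le_affineInterpolant_sub_of_strongConvexOn (hf : StrongConvexOn s m f) (hu : u ∈ s)
    (hv : v ∈ s) (hp : p ∈ segment ℝ u v) :
    m / 2 * ((p - u) * (v - p)) ≤ affineInterpolant f u v p - f p := by
  obtain ⟨α, β, hα, hβ, hαβ, rfl⟩ := hp
  have h := hf.2 hu hv hα hβ hαβ
  simp only [smul_eq_mul, Real.norm_eq_abs, sq_abs] at h ⊢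
  rw [affineInterpolant_convexCombination f u v hαβ]
  obtain rfl := eq_sub_of_add_eq hαβ
  linarith

lemma affineInterpolant_sub_le_of_strongConcaveOn (hf : StrongConcaveOn s m f) (hu : u ∈ s)
    (hv : v ∈ s) (hp : p ∈ segment ℝ u v) :
    affineInterpolant f u v p - f p ≤ -m / 2 * ((p - u) * (v - p)) := by
  obtain ⟨α, β, hα, hβ, hαβ, rfl⟩ := hp
  have h := hf.2 hu hv hα hβ hαβ
  simp only [smul_eq_mul, Real.norm_eq_abs, sq_abs] at h ⊢
  rw [affineInterpolant_convexCombination f u v hαβ]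
  obtain rfl := eq_sub_of_add_eq hαβ
  linarith

lemma refinementWeight_of_mem_left (hp : p ∈ Ioo u y) :
    refinementWeight u y v p = (v - y) / (v - p) := by
  have hp' : p ∉ Ioo y v := fun h ↦ hp.2.not_gt h.1
  simp [refinementWeight, hp, hp']

lemma refinementWeight_of_mem_right (hp : p ∈ Ioo y v) :
    refinementWeight u y v p = (y - u) / (p - u) := by
  have hp' : p ∉ Ioo u y := fun h ↦ hp.1.not_gt h.2
  simp [refinementWeight, hp, hp']

lemma refinementWeight_self (u y v : ℝ) : refinementWeight u y v y = 0 := by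
  simp [refinementWeight]

lemma refinementWeight_nonneg (hy : y ∈ Icc u v) (hp : p ∈ Icc u v) :
    0 ≤ refinementWeight u y v p :=
  add_nonneg
    (mul_nonneg (div_nonneg (sub_nonneg.2 hy.2) (sub_nonneg.2 hp.2))
      (indicator_nonneg (fun _ _ ↦ zero_le_one) p))
    (mul_nonneg (div_nonneg (sub_nonneg.2 hy.1) (sub_nonneg.2 hp.1))
      (indicator_nonneg (fun _ _ ↦ zero_le_one) p))

lemma affineInterpolant_sub_nonneg (hf : ConvexOn ℝ s f) (hu : u ∈ s) (hv : v ∈ s)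
    (hp : p ∈ segment ℝ u v) : 0 ≤ affineInterpolant f u v p - f p := by
  simpa using le_affineInterpolant_sub_of_strongConvexOn (strongConvexOn_zero.2 hf) hu hv hp

lemma refinedInterpolant_sub_nonneg (hf : ConvexOn ℝ s f) (hu : u ∈ s) (hv : v ∈ s)
    (hy : y ∈ Icc u v) (hp : p ∈ Icc u v) : 0 ≤ refinedInterpolant f u y v p - f p := by
  have hys : y ∈ s := hf.1.ordConnected.out hu hv hy
  obtain hpy | hyp := le_total p y
  · rw [refinedInterpolant_of_le hpy]
    exact affineInterpolant_sub_nonneg hf hu hys (Icc_subset_segment ⟨hp.1, hpy⟩)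
  · rw [refinedInterpolant_of_ge hyp]
    exact affineInterpolant_sub_nonneg hf hys hv (Icc_subset_segment ⟨hyp, hp.2⟩)

lemma sub_div_sub_nonneg_of_mem_segment (hy : y ∈ segment ℝ u v) (hp : p ∈ segment ℝ u v) :
    0 ≤ (p - u) / (y - u) := by
  rw [segment_eq_uIcc, mem_uIcc] at hy hp
  obtain ⟨huy, hyv⟩ | ⟨hvy, hyu⟩ := hy <;> obtain ⟨hup, hpv⟩ | ⟨hvp, hpu⟩ := hp
  · exact div_nonneg (by linarith) (by linarith)
  · exact div_nonneg (by linarith) (by linarith)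
  · exact div_nonneg_of_nonpos (by linarith) (by linarith)
  · exact div_nonneg_of_nonpos (by linarith) (by linarith)

-- The nodes are unordered, so that exchanging `u` and `v` yields the estimate beyond `y`.
lemma le_affineInterpolant_sub_affineInterpolant (hm : 0 ≤ m) (hM : 0 < M)
    (hfm : StrongConvexOn s m f) (hfM : StrongConcaveOn s (-M) f) (hu : u ∈ s) (hv : v ∈ s)
    (hy : y ∈ segment ℝ u v) (hyu : y ≠ u) (hp : p ∈ segment ℝ u v) (hpv : p ≠ v) :
    m / M * ((v - y) / (v - p)) * (affineInterpolant f u v p - f p) ≤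
      affineInterpolant f u v p - affineInterpolant f u y p := by
  have hleft : 0 ≤ (p - u) / (y - u) := sub_div_sub_nonneg_of_mem_segment hy hp
  have hright : 0 ≤ (v - y) / (v - p) := by
    rw [← neg_sub y, ← neg_sub p, neg_div_neg_eq]
    rw [segment_symm] at hy hp
    exact sub_div_sub_nonneg_of_mem_segment hp hy
  have hupper : affineInterpolant f u v p - f p ≤ M / 2 * ((p - u) * (v - p)) := by
    simpa only [neg_neg] using affineInterpolant_sub_le_of_strongConcaveOn hfM hu hv hp
  have hlower : m / 2 * ((y - u) * (v - y)) ≤ affineInterpolant f u v y - f y :=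
    le_affineInterpolant_sub_of_strongConvexOn hfm hu hv hy
  calc m / M * ((v - y) / (v - p)) * (affineInterpolant f u v p - f p)
      ≤ m / M * ((v - y) / (v - p)) * (M / 2 * ((p - u) * (v - p))) := by gcongr
    _ = (p - u) / (y - u) * (m / 2 * ((y - u) * (v - y))) := by field_simp
    _ ≤ (p - u) / (y - u) * (affineInterpolant f u v y - f y) := by gcongr
    _ = affineInterpolant f u v p - affineInterpolant f u y p :=
      (affineInterpolant_sub_affineInterpolant f v p hyu).symm

lemma refinementWeight_mul_le (hm : 0 ≤ m) (hM : 0 < M) (hfm : StrongConvexOn s m f)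
    (hfM : StrongConcaveOn s (-M) f) (hu : u ∈ s) (hv : v ∈ s) (hy : y ∈ Ioo u v)
    (hp : p ∈ Ioo u v) :
    m / M * refinementWeight u y v p * (affineInterpolant f u v p - f p) ≤
      affineInterpolant f u v p - refinedInterpolant f u y v p := by
  have hys : y ∈ segment ℝ u v := Icc_subset_segment (Ioo_subset_Icc_self hy)
  have hps : p ∈ segment ℝ u v := Icc_subset_segment (Ioo_subset_Icc_self hp)
  obtain hpy | rfl | hyp := lt_trichotomy p y
  · rw [refinementWeight_of_mem_left ⟨hp.1, hpy⟩, refinedInterpolant_of_le hpy.le]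
    exact le_affineInterpolant_sub_affineInterpolant hm hM hfm hfM hu hv hys hy.1.ne' hps hp.2.ne
  · rw [refinementWeight_self, refinedInterpolant_self, mul_zero, zero_mul]
    have hconv : ConvexOn ℝ s f := strongConvexOn_zero.1 (hfm.mono hm)
    exact affineInterpolant_sub_nonneg hconv hu hv hps
  · rw [refinementWeight_of_mem_right ⟨hyp, hp.2⟩, refinedInterpolant_of_ge hyp.le,
      affineInterpolant_comm f u v, affineInterpolant_comm f y v, ← neg_sub u y, ← neg_sub u p,
      neg_div_neg_eq]
    rw [segment_symm] at hys hps
    exact le_affineInterpolant_sub_affineInterpolant hm hM hfm hfM hv hu hys hy.2.ne hps hp.1.ne'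

-- `StrongConcaveOn s (-M) f` says that `M x² / 2 - f` is convex, which replaces `f'' ≤ M`.
theorem refined_interpolation_improvement_general (hm : 0 ≤ m) (hM : 0 < M)
    (hfm : StrongConvexOn s m f) (hfM : StrongConcaveOn s (-M) f) (hu : u ∈ s) (hv : v ∈ s)
    (hy : y ∈ Ioo u v) {J Jy : ℝ → ℝ} (hJ : ∀ p, J p = affineInterpolant f u v p - f p)
    (hJy : ∀ p, Jy p = refinedInterpolant f u y v p - f p) :
    (∀ p ∈ Icc u v, 0 ≤ J p ∧ 0 ≤ Jy p) ∧
    (∀ p ∈ Ioo u v,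
      m / M * refinementWeight u y v p * J p ≤ J p - Jy p ∧
      0 ≤ m / M * refinementWeight u y v p * J p) ∧
    Jy y = 0 := by
  have hconv : ConvexOn ℝ s f := strongConvexOn_zero.1 (hfm.mono hm)
  have hJ_nonneg : ∀ p ∈ Icc u v, 0 ≤ J p := fun p hp ↦ by
    rw [hJ]
    exact affineInterpolant_sub_nonneg hconv hu hv (Icc_subset_segment hp)
  have hJy_nonneg : ∀ p ∈ Icc u v, 0 ≤ Jy p := fun p hp ↦ by
    rw [hJy]
    exact refinedInterpolant_sub_nonneg hconv hu hv (Ioo_subset_Icc_self hy) hp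
  refine ⟨fun p hp ↦ ⟨hJ_nonneg p hp, hJy_nonneg p hp⟩, fun p hp ↦ ⟨?_, ?_⟩, ?_⟩
  · rw [hJ, hJy, sub_sub_sub_cancel_right]
    exact refinementWeight_mul_le hm hM hfm hfM hu hv hy hp
  · have hp' : p ∈ Icc u v := Ioo_subset_Icc_self hp
    have hweight := refinementWeight_nonneg (Ioo_subset_Icc_self hy) hp'
    exact mul_nonneg (mul_nonneg (div_nonneg hm hM.le) hweight) (hJ_nonneg p hp')
  · rw [hJy, refinedInterpolant_self, sub_self]

/-- **Statement 17.** Let `f : [a,b] → ℝ` be twice continuously differentiable with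
`0 < m ≤ f'' ≤ M` on `[a,b]`, let `u < v` in `[a,b]`, `ℓ` the affine interpolant of `f`
through `(u, f(u))`, `(v, f(v))`, and for `y ∈ (u, v)` let `ℓ_y` be the piecewise linear
interpolant with nodes `u, y, v`. With `J(p) = ℓ(p) − f(p)` and `J_y(p) = ℓ_y(p) − f(p)`,
we have `J, J_y ≥ 0` on `[u, v]`, and for every `p ∈ (u, v)`,
`J(p) − J_y(p) ≥ (m/M)[((v−y)/(v−p))·1_{(u,y)}(p) + ((y−u)/(p−u))·1_{(y,v)}(p)]·J(p) ≥ 0`;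
moreover `J_y(y) = 0`. -/
theorem refined_interpolation_improvement
    (a b m M : ℝ) (hab : a < b) (f f' f'' : ℝ → ℝ)
    (hf' : ∀ x ∈ Set.Icc a b, HasDerivWithinAt f (f' x) (Set.Icc a b) x)
    (hf'' : ∀ x ∈ Set.Icc a b, HasDerivWithinAt f' (f'' x) (Set.Icc a b) x)
    (hf''cont : ContinuousOn f'' (Set.Icc a b))
    (hm : 0 < m) (hbound : ∀ x ∈ Set.Icc a b, m ≤ f'' x ∧ f'' x ≤ M)
    (u v y : ℝ) (hu : u ∈ Set.Icc a b) (hv : v ∈ Set.Icc a b) (huv : u < v)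
    (hy : y ∈ Set.Ioo u v)
    (J Jy : ℝ → ℝ)
    (hJ : ∀ p : ℝ, J p = (f u + (f v - f u) / (v - u) * (p - u)) - f p)
    (hJy : ∀ p : ℝ, Jy p =
      (if p ≤ y then f u + (f y - f u) / (y - u) * (p - u)
       else f y + (f v - f y) / (v - y) * (p - y)) - f p) :
    (∀ p ∈ Set.Icc u v, 0 ≤ J p ∧ 0 ≤ Jy p) ∧
    (∀ p ∈ Set.Ioo u v,
      m / M * ((v - y) / (v - p) * Set.indicator (Set.Ioo u y) (fun _ => (1 : ℝ)) p
          + (y - u) / (p - u) * Set.indicator (Set.Ioo y v) (fun _ => (1 : ℝ)) p) * J p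
        ≤ J p - Jy p ∧
      0 ≤ m / M * ((v - y) / (v - p) * Set.indicator (Set.Ioo u y) (fun _ => (1 : ℝ)) p
          + (y - u) / (p - u) * Set.indicator (Set.Ioo y v) (fun _ => (1 : ℝ)) p) * J p) ∧
    Jy y = 0 := by
  have hcont : ContinuousOn f (Icc a b) := HasDerivWithinAt.continuousOn hf'
  have hderiv : ∀ x ∈ interior (Icc a b), HasDerivWithinAt f (f' x) (interior (Icc a b)) x :=
    fun x hx ↦ (hf' x (interior_subset hx)).mono interior_subset
  have hderiv2 : ∀ x ∈ interior (Icc a b), HasDerivWithinAt f' (f'' x) (interior (Icc a b)) x :=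
    fun x hx ↦ (hf'' x (interior_subset hx)).mono interior_subset
  have hconv : StrongConvexOn (Icc a b) m f :=
    strongConvexOn_of_hasDerivWithinAt2_ge (convex_Icc a b) hcont hderiv hderiv2
      fun x hx ↦ (hbound x (interior_subset hx)).1
  have hconc : StrongConcaveOn (Icc a b) (-M) f :=
    strongConcaveOn_of_hasDerivWithinAt2_le (convex_Icc a b) hcont hderiv hderiv2
      fun x hx ↦ (hbound x (interior_subset hx)).2.trans_eq (neg_neg M).symm
  have hM : 0 < M := hm.trans_le ((hbound u hu).1.trans (hbound u hu).2)
  exact refined_interpolation_improvement_general hm.le hM hconv hconc hu hv hy hJ hJy
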